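/- arXiv:math/0005058 — 2 statements merged into one kernel-verified Lean document; each statement's English description precedes it below -/
import Mathlib

section
/- Separation theorem, direct part (Theorem 6.5, part 1, spectral form). Let V = {Vⁿ} be a general source and W = {Wⁿ} a general channel. If there exists a channel input X = {Xⁿ} (a sequence of distributions P_{Xⁿ} on 𝒳ⁿ, with Yⁿ the channel output of Wⁿ on input Xⁿ) such that H̄(V) < I_(X;Y), then V is transmissible over W. -/
open Filter Real Topology

namespace ISC

/-- Words of length `n` over alphabet `A`. -/
abbrev Word (A : Type*) (n : ℕ) : Type _ := Fin n → A

/-- `p` is a probability mass function. -/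
def IsPMF {α : Type*} (p : α → ℝ) : Prop :=
  (∀ a, 0 ≤ p a) ∧ HasSum p 1

/-- Probability of the event `S` under the pmf `p`. -/
noncomputable def prob {α : Type*} (p : α → ℝ) (S : Set α) : ℝ :=
  ∑' a, S.indicator p a

/-- Output marginal `P_{Yⁿ}` of the channel `W` fed with the joint input law `P_{VⁿXⁿ}`. -/
noncomputable def outDist {𝒱 𝒳 𝒴 : Type*} {n : ℕ}
    (PVX : Word 𝒱 n × Word 𝒳 n → ℝ) (W : Word 𝒳 n → Word 𝒴 n → ℝ)
    (y : Word 𝒴 n) : ℝ :=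
  ∑' vx : Word 𝒱 n × Word 𝒳 n, PVX vx * W vx.2 y

/-- Joint law of `(Vⁿ, Xⁿ, Yⁿ)`: `P_{VⁿXⁿ}(v,x) · Wⁿ(y|x)`. -/
noncomputable def jointLaw {𝒱 𝒳 𝒴 : Type*} {n : ℕ}
    (PVX : Word 𝒱 n × Word 𝒳 n → ℝ) (W : Word 𝒳 n → Word 𝒴 n → ℝ) :
    Word 𝒱 n × Word 𝒳 n × Word 𝒴 n → ℝ :=
  fun z => PVX (z.1, z.2.1) * W z.2.1 z.2.2

/-- The joint input law `P_{VⁿXⁿ}` induced by the deterministic encoder `φ`: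
`P_{Vⁿ}(v) 1{x = φ(v)}`. -/
noncomputable def codeInput {𝒱 𝒳 : Type*} [DecidableEq 𝒳] {n : ℕ} (PV : Word 𝒱 n → ℝ)
    (φ : Word 𝒱 n → Word 𝒳 n) : Word 𝒱 n × Word 𝒳 n → ℝ :=
  fun vx => if vx.2 = φ vx.1 then PV vx.1 else 0

/-- Error probability `εₙ` of the joint source-channel code `(φ, ψ)`. -/
noncomputable def errProb {𝒱 𝒳 𝒴 : Type*} {n : ℕ}
    (PV : Word 𝒱 n → ℝ) (W : Word 𝒳 n → Word 𝒴 n → ℝ)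
    (φ : Word 𝒱 n → Word 𝒳 n) (ψ : Word 𝒴 n → Word 𝒱 n) : ℝ :=
  ∑' v, PV v * prob (W (φ v)) {y | ψ y ≠ v}

/-- `V` is transmissible over `W`. -/
def Transmissible {𝒱 𝒳 𝒴 : Type*} (PV : (n : ℕ) → Word 𝒱 n → ℝ)
    (W : (n : ℕ) → Word 𝒳 n → Word 𝒴 n → ℝ) : Prop :=
  ∃ (φ : (n : ℕ) → Word 𝒱 n → Word 𝒳 n) (ψ : (n : ℕ) → Word 𝒴 n → Word 𝒱 n),
    Tendsto (fun n => errProb (PV n) (W n) (φ n) (ψ n)) atTop (nhds 0)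

/-- Output marginal of the channel `W` for an input distribution `P_{Xⁿ}`. -/
noncomputable def outDistX {𝒳 𝒴 : Type*} {n : ℕ}
    (PX : Word 𝒳 n → ℝ) (W : Word 𝒳 n → Word 𝒴 n → ℝ) (y : Word 𝒴 n) : ℝ :=
  ∑' x : Word 𝒳 n, PX x * W x y

/-- Joint law of `(Xⁿ, Yⁿ)`: `P_{Xⁿ}(x) · Wⁿ(y|x)`. -/
noncomputable def jointXY {𝒳 𝒴 : Type*} {n : ℕ}
    (PX : Word 𝒳 n → ℝ) (W : Word 𝒳 n → Word 𝒴 n → ℝ) :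
    Word 𝒳 n × Word 𝒴 n → ℝ :=
  fun z => PX z.1 * W z.1 z.2

/-- Limit superior in probability of a sequence of random variables `Z i`
distributed according to the pmfs `p i`. -/
noncomputable def plimsup {α : ℕ → Type*} (p : (i : ℕ) → α i → ℝ)
    (Z : (i : ℕ) → α i → ℝ) : EReal :=
  sInf {β : EReal |
    Tendsto (fun i => prob (p i) {a | β < (Z i a : EReal)}) atTop (nhds 0)}

/-- Limit inferior in probability of a sequence of random variables `Z i`
distributed according to the pmfs `p i`. -/
noncomputable def pliminf {α : ℕ → Type*} (p : (i : ℕ) → α i → ℝ)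
    (Z : (i : ℕ) → α i → ℝ) : EReal :=
  sSup {β : EReal |
    Tendsto (fun i => prob (p i) {a | (Z i a : EReal) < β}) atTop (nhds 0)}

/-- Spectral sup-entropy rate `H̄(V)`. -/
noncomputable def Hbar {𝒱 : Type*} (PV : (n : ℕ) → Word 𝒱 n → ℝ) : EReal :=
  plimsup (fun n => PV n) (fun n v => (1 / (n : ℝ)) * Real.log (1 / PV n v))

/-- Spectral inf-entropy rate `H_(V)`. -/
noncomputable def Hlow {𝒱 : Type*} (PV : (n : ℕ) → Word 𝒱 n → ℝ) : EReal :=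
  pliminf (fun n => PV n) (fun n v => (1 / (n : ℝ)) * Real.log (1 / PV n v))

/-- Spectral inf-information rate `I_(X;Y)` of the channel `W` with input `X`. -/
noncomputable def Ilow {𝒳 𝒴 : Type*} (PX : (n : ℕ) → Word 𝒳 n → ℝ)
    (W : (n : ℕ) → Word 𝒳 n → Word 𝒴 n → ℝ) : EReal :=
  pliminf (fun n => jointXY (PX n) (W n))
    (fun n z => (1 / (n : ℝ)) * Real.log (W n z.1 z.2 / outDistX (PX n) (W n) z.2))

/-- Spectral sup-information rate `Ī(X;Y)` of the channel `W` with input `X`. -/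
noncomputable def Ihigh {𝒳 𝒴 : Type*} (PX : (n : ℕ) → Word 𝒳 n → ℝ)
    (W : (n : ℕ) → Word 𝒳 n → Word 𝒴 n → ℝ) : EReal :=
  plimsup (fun n => jointXY (PX n) (W n))
    (fun n z => (1 / (n : ℝ)) * Real.log (W n z.1 z.2 / outDistX (PX n) (W n) z.2))

/-- `sup_X I_(X;Y)`: the supremum over all channel inputs. -/
noncomputable def supIlow {𝒳 𝒴 : Type*}
    (W : (n : ℕ) → Word 𝒳 n → Word 𝒴 n → ℝ) : EReal :=
  ⨆ PX : {PX : (n : ℕ) → Word 𝒳 n → ℝ // ∀ n, IsPMF (PX n)}, Ilow PX.1 W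

section Helpers

variable {α β : Type*}

lemma summ_ind {p : α → ℝ} (hs : Summable p) (S : Set α) : Summable (S.indicator p) :=
  hs.indicator S

lemma prob_nonneg {p : α → ℝ} (h0 : ∀ a, 0 ≤ p a) (S : Set α) : 0 ≤ prob p S :=
  tsum_nonneg fun a => Set.indicator_nonneg (fun a _ => h0 a) a

lemma prob_mono' {p : α → ℝ} (h0 : ∀ a, 0 ≤ p a) (hs : Summable p) {S S' : Set α}
    (h : ∀ a, 0 < p a → a ∈ S → a ∈ S') : prob p S ≤ prob p S' := by
  classical
  refine Summable.tsum_le_tsum (fun a => ?_) (summ_ind hs S) (summ_ind hs S')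
  by_cases h1 : a ∈ S
  · rcases (h0 a).lt_or_eq with h2 | h2
    · simp [h1, h a h2 h1]
    · simp [Set.indicator_apply, ← h2]
  · rw [Set.indicator_of_notMem h1]
    exact Set.indicator_nonneg (fun a _ => h0 a) a

lemma prob_compl {p : α → ℝ} (hs : HasSum p 1) (S : Set α) :
    prob p S + prob p Sᶜ = 1 := by
  unfold prob
  rw [← (summ_ind hs.summable S).tsum_add (summ_ind hs.summable Sᶜ), ← hs.tsum_eq]
  refine tsum_congr fun a => ?_
  exact congrFun (Set.indicator_self_add_compl S p) a

lemma prob_le_one {p : α → ℝ} (hp : IsPMF p) (S : Set α) : prob p S ≤ 1 := by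
  have := prob_compl hp.2 S
  have := prob_nonneg hp.1 Sᶜ
  linarith

lemma prob_le_diff {p : α → ℝ} (h0 : ∀ a, 0 ≤ p a) (hs : Summable p) (S D : Set α) :
    prob p S ≤ prob p (S \ D) + prob p D := by
  classical
  unfold prob
  rw [← (summ_ind hs _).tsum_add (summ_ind hs _)]
  refine Summable.tsum_le_tsum (fun a => ?_) (summ_ind hs S)
    ((summ_ind hs _).add (summ_ind hs _))
  have := h0 a
  by_cases h1 : a ∈ S <;> by_cases h2 : a ∈ D <;> simp [h1, h2, this]

lemma prob_biUnion_le {ι : Type*} {p : α → ℝ} (h0 : ∀ a, 0 ≤ p a) (hs : Summable p)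
    (T : Finset ι) (D : ι → Set α) :
    prob p (⋃ i ∈ T, D i) ≤ ∑ i ∈ T, prob p (D i) := by
  classical
  induction T using Finset.induction_on with
  | empty => simp [prob]
  | insert i T hi ih =>
    rw [Finset.sum_insert hi, Finset.set_biUnion_insert]
    refine (prob_le_diff h0 hs _ (⋃ i ∈ T, D i)).trans (add_le_add ?_ ih)
    refine prob_mono' h0 hs fun a _ ha => ?_
    rcases ha.1 with h | h
    · exact h
    · exact absurd h ha.2

lemma IsPMF.nonempty {p : α → ℝ} (hp : IsPMF p) : Nonempty α := by
  by_contra h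
  rw [not_nonempty_iff] at h
  have := hp.2.unique hasSum_empty
  norm_num at this

variable {PX : α → ℝ} {W : α → β → ℝ}

lemma summable_joint (hPX : IsPMF PX) (hW : ∀ x, IsPMF (W x)) :
    Summable (fun z : α × β => PX z.1 * W z.1 z.2) := by
  have h0 : (0 : α × β → ℝ) ≤ fun z : α × β => PX z.1 * W z.1 z.2 :=
    fun z => mul_nonneg (hPX.1 z.1) ((hW z.1).1 z.2)
  have h1 : ∀ x, HasSum (fun y => PX x * W x y) (PX x) := fun x => by
    have := (hW x).2.mul_left (PX x)
    rwa [mul_one] at this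
  have h2 : (fun x => ∑' y, PX x * W x y) = PX := funext fun x => (h1 x).tsum_eq
  have h3 : Summable (fun x => ∑' y, PX x * W x y) := by
    rw [h2]
    exact hPX.2.summable
  exact (summable_prod_of_nonneg h0).2 ⟨fun x => (h1 x).summable, h3⟩

lemma isPMF_joint (hPX : IsPMF PX) (hW : ∀ x, IsPMF (W x)) :
    IsPMF (fun z : α × β => PX z.1 * W z.1 z.2) := by
  have hs := summable_joint hPX hW
  refine ⟨fun z => mul_nonneg (hPX.1 _) ((hW _).1 _), ?_⟩
  have : ∑' z : α × β, PX z.1 * W z.1 z.2 = 1 := by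
    rw [hs.tsum_prod]
    simp only [tsum_mul_left, (hW _).2.tsum_eq, mul_one]
    exact hPX.2.tsum_eq
  rw [← this]
  exact hs.hasSum

lemma hasSum_joint (hPX : IsPMF PX) (hW : ∀ x, IsPMF (W x)) (A : Set (α × β)) :
    HasSum (fun x => PX x * prob (W x) {y | (x, y) ∈ A})
      (prob (fun z : α × β => PX z.1 * W z.1 z.2) A) := by
  classical
  have hs := summ_ind (summable_joint hPX hW) A
  have h := hs.hasSum.prod_fiberwise (fun x => (hs.prod_factor x).hasSum)
  have e : prob (fun z : α × β => PX z.1 * W z.1 z.2) A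
      = ∑' b : α × β, A.indicator (fun z => PX z.1 * W z.1 z.2) b := rfl
  rw [e]
  convert h using 2 with x
  unfold prob
  rw [← tsum_mul_left]
  refine tsum_congr fun y => ?_
  by_cases h : (x, y) ∈ A <;> simp [h]

lemma summable_out (hPX : IsPMF PX) (hW : ∀ x, IsPMF (W x)) :
    Summable (fun y => ∑' x, PX x * W x y) := by
  have hs := summable_joint hPX hW
  exact hs.prod_symm.prod

lemma prob_out (hPX : IsPMF PX) (hW : ∀ x, IsPMF (W x)) (D : Set β) :
    prob (fun z : α × β => PX z.1 * W z.1 z.2) {z | z.2 ∈ D}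
      = prob (fun y => ∑' x, PX x * W x y) D := by
  classical
  have hs := summ_ind (summable_joint hPX hW) {z | z.2 ∈ D}
  unfold prob
  rw [← (Equiv.prodComm β α).tsum_eq, Summable.tsum_prod]
  · refine tsum_congr fun y => ?_
    by_cases h : y ∈ D <;> simp [h]
  · exact hs.prod_symm

/-- One step of Feinstein's greedy construction. -/
lemma exists_codeword (hPX : IsPMF PX) (hW : ∀ x, IsPMF (W x)) (A : Set (α × β))
    (D : Set β) :
    ∃ x, prob (fun z : α × β => PX z.1 * W z.1 z.2) A
        - prob (fun y => ∑' x, PX x * W x y) D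
      ≤ prob (W x) ({y | (x, y) ∈ A} \ D) := by
  by_contra! hcon
  set c := prob (fun z : α × β => PX z.1 * W z.1 z.2) A
        - prob (fun y => ∑' x, PX x * W x y) D with hc
  have h1 := (hasSum_joint hPX hW A).sub (hasSum_joint hPX hW {z | z.2 ∈ D})
  rw [prob_out hPX hW, ← hc] at h1
  have h2 : HasSum (fun x => PX x * c) (1 * c) := hPX.2.mul_right c
  have h3 : ∀ x, prob (W x) {y | (x, y) ∈ A} - prob (W x) D < c := fun x => by
    have := prob_le_diff (hW x).1 (hW x).2.summable {y | (x, y) ∈ A} D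
    have := hcon x
    linarith
  have h4 : ∃ x, 0 < PX x := by
    by_contra! h
    have : PX = fun _ => 0 := funext fun x => le_antisymm (h x) (hPX.1 x)
    have h5 := hPX.2
    rw [this] at h5
    have := h5.unique hasSum_zero
    norm_num at this
  obtain ⟨x0, hx0⟩ := h4
  have h6 := hasSum_lt (i := x0) (fun x => ?_) ?_ h1 h2
  · linarith
  · have := mul_le_mul_of_nonneg_left (h3 x).le (hPX.1 x)
    simp only [Set.mem_ofPred_eq, mul_sub] at this ⊢
    exact this
  · have := mul_lt_mul_of_pos_left (h3 x0) hx0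
    simp only [Set.mem_ofPred_eq, mul_sub] at this ⊢
    exact this

lemma feinstein {γ : Type*} (hPX : IsPMF PX) (hW : ∀ x, IsPMF (W x)) {t : ℝ} (ht : 0 < t)
    (A : Set (α × β)) (hA : A = {z | (∑' x, PX x * W x z.2) ≤ t * W z.1 z.2})
    (T : Finset γ) :
    ∃ (φ : γ → α) (D : γ → Set β), (∀ v ∈ T, ∀ w ∈ T, v ≠ w → Disjoint (D v) (D w)) ∧
      (∀ v ∈ T, prob (fun y => ∑' x, PX x * W x y) (D v) ≤ t) ∧
      (∀ v ∈ T, prob (fun z : α × β => PX z.1 * W z.1 z.2) A - T.card * t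
        ≤ prob (W (φ v)) (D v)) := by
  classical
  have hout0 : ∀ y, 0 ≤ ∑' x, PX x * W x y := fun y =>
    tsum_nonneg fun x => mul_nonneg (hPX.1 _) ((hW _).1 _)
  have houts := summable_out hPX hW
  induction T using Finset.induction_on with
  | empty => exact ⟨fun _ => hPX.nonempty.some, fun _ => ∅, by simp⟩
  | insert v0 T hv ih =>
    obtain ⟨φ, D, h1, h2, h3⟩ := ih
    set U : Set β := ⋃ v ∈ T, D v with hU
    obtain ⟨x, hx⟩ := exists_codeword hPX hW A U
    have hUle : prob (fun y => ∑' x, PX x * W x y) U ≤ T.card * t := by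
      refine (prob_biUnion_le hout0 houts T D).trans ?_
      refine (Finset.sum_le_sum h2).trans ?_
      simp
    have hne : ∀ v ∈ T, v ≠ v0 := fun v h e => hv (e ▸ h)
    have hdis : ∀ v ∈ T, Disjoint (D v) ({y | (x, y) ∈ A} \ U) := fun v h => by
      refine Set.disjoint_left.2 fun y hy hy2 => hy2.2 ?_
      exact Set.mem_biUnion (Finset.mem_coe.2 h) hy
    have hcard : ((insert v0 T).card : ℝ) * t = T.card * t + t := by
      rw [Finset.card_insert_of_notMem hv]; push_cast; ring
    refine ⟨Function.update φ v0 x, Function.update D v0 ({y | (x, y) ∈ A} \ U), ?_, ?_, ?_⟩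
    · intro v hv1 w hw1 hvw
      rcases Finset.mem_insert.1 hv1 with e | hv2 <;> rcases Finset.mem_insert.1 hw1 with e' | hw2
      · exact absurd (e.trans e'.symm) hvw
      · subst e
        rw [Function.update_self, Function.update_of_ne (hne w hw2)]
        exact (hdis w hw2).symm
      · subst e'
        rw [Function.update_self, Function.update_of_ne (hne v hv2)]
        exact hdis v hv2
      · rw [Function.update_of_ne (hne w hw2), Function.update_of_ne (hne v hv2)]
        exact h1 v hv2 w hw2 hvw
    · intro v hv1
      rcases Finset.mem_insert.1 hv1 with e | hv2
      · subst e
        rw [Function.update_self]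
        have hle : prob (fun y => ∑' x, PX x * W x y) ({y | (x, y) ∈ A} \ U)
            ≤ t * prob (W x) ({y | (x, y) ∈ A} \ U) := by
          unfold prob
          rw [← tsum_mul_left]
          refine Summable.tsum_le_tsum (fun y => ?_) (summ_ind houts _)
            ((summ_ind (hW x).2.summable _).mul_left t)
          by_cases hy : y ∈ {y | (x, y) ∈ A} \ U
          · rw [Set.indicator_of_mem hy, Set.indicator_of_mem hy]
            have := hy.1
            rw [hA] at this
            exact this
          · rw [Set.indicator_of_notMem hy, Set.indicator_of_notMem hy, mul_zero]
        have := prob_le_one (hW x) ({y | (x, y) ∈ A} \ U)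
        nlinarith
      · rw [Function.update_of_ne (hne v hv2)]
        exact h2 v hv2
    · intro v hv1
      rw [hcard]
      rcases Finset.mem_insert.1 hv1 with e | hv2
      · subst e
        rw [Function.update_self, Function.update_self]
        linarith
      · rw [Function.update_of_ne (hne v hv2), Function.update_of_ne (hne v hv2)]
        have := h3 v hv2
        linarith

lemma one_shot {γ : Type*} {PV : γ → ℝ} (hPV : IsPMF PV)
    (hPX : IsPMF PX) (hW : ∀ x, IsPMF (W x)) {s t : ℝ} (hs : 0 < s) (ht : 0 < t) :
    ∃ (φ : γ → α) (ψ : β → γ),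
      ∑' v, PV v * prob (W (φ v)) {y | ψ y ≠ v} ≤
        prob PV {v | PV v < s} +
        prob (fun z : α × β => PX z.1 * W z.1 z.2)
          {z | t * W z.1 z.2 < ∑' x, PX x * W x z.2} + t / s := by
  classical
  have hfin : {v | s ≤ PV v}.Finite := by
    have h := hPV.2.summable.tendsto_cofinite_zero.eventually (gt_mem_nhds hs)
    rw [Filter.eventually_cofinite] at h
    simpa using h
  set T := hfin.toFinset with hT
  have hmem : ∀ v, v ∈ T ↔ s ≤ PV v := fun v => by simp [hT]
  have hcard : (T.card : ℝ) * t ≤ t / s := by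
    have h1 : (T.card : ℝ) * s ≤ ∑ v ∈ T, PV v := by
      rw [← nsmul_eq_mul]
      exact Finset.card_nsmul_le_sum _ _ _ fun v hv => (hmem v).1 hv
    have h2 := sum_le_hasSum T (fun v _ => hPV.1 v) hPV.2
    rw [le_div_iff₀ hs]
    nlinarith
  obtain ⟨φ, D, h1, -, h3⟩ := feinstein hPX hW ht _ rfl T
  have hψ : ∀ y, ∃ v, ∀ w ∈ T, y ∈ D w → v = w := by
    intro y
    by_cases h : ∃ w ∈ T, y ∈ D w
    · obtain ⟨w, hw, hy⟩ := h
      refine ⟨w, fun w' hw' hy' => ?_⟩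
      by_contra hne
      exact Set.disjoint_left.1 (h1 w hw w' hw' hne) hy hy'
    · exact ⟨hPV.nonempty.some, fun w hw hy => absurd ⟨w, hw, hy⟩ h⟩
  choose ψ hψ using hψ
  refine ⟨φ, ψ, ?_⟩
  set e := prob (fun z : α × β => PX z.1 * W z.1 z.2)
          {z | t * W z.1 z.2 < ∑' x, PX x * W x z.2} with he
  have hJ := isPMF_joint hPX hW
  have hcomp := prob_compl hJ.2 {z | (∑' x, PX x * W x z.2) ≤ t * W z.1 z.2}
  have hset : {z : α × β | (∑' x, PX x * W x z.2) ≤ t * W z.1 z.2}ᶜ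
      = {z | t * W z.1 z.2 < ∑' x, PX x * W x z.2} := by
    ext z; simp
  rw [hset, ← he] at hcomp
  have he0 : 0 ≤ e := prob_nonneg hJ.1 _
  have hts : 0 < t / s := div_pos ht hs
  have hbound : ∀ v ∈ T, prob (W (φ v)) {y | ψ y ≠ v} ≤ e + t / s := by
    intro v hv
    have a1 := h3 v hv
    have a2 := prob_compl (hW (φ v)).2 (D v)
    have a3 : prob (W (φ v)) {y | ψ y ≠ v} ≤ prob (W (φ v)) (D v)ᶜ :=
      prob_mono' (hW _).1 (hW _).2.summable fun y _ hy hyD => hy (hψ y v hv hyD)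
    linarith
  have hsum1 : HasSum (fun v => {v | PV v < s}.indicator PV v + PV v * (e + t / s))
      (prob PV {v | PV v < s} + 1 * (e + t / s)) :=
    (summ_ind hPV.2.summable _).hasSum.add (hPV.2.mul_right _)
  have hsum2 : Summable fun v => PV v * prob (W (φ v)) {y | ψ y ≠ v} := by
    refine Summable.of_nonneg_of_le (fun v => mul_nonneg (hPV.1 v) (prob_nonneg (hW _).1 _))
      (fun v => ?_) hPV.2.summable
    exact mul_le_of_le_one_right (hPV.1 v) (prob_le_one (hW _) _)
  have := hsum2.tsum_le_tsum (fun v => ?_) hsum1.summable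
  · rw [hsum1.tsum_eq] at this
    linarith
  · by_cases hv : s ≤ PV v
    · rw [Set.indicator_of_notMem (by simpa using hv), zero_add]
      exact mul_le_mul_of_nonneg_left (hbound v ((hmem v).2 hv)) (hPV.1 v)
    · rw [Set.indicator_of_mem (by simpa using hv)]
      have b1 := mul_le_of_le_one_right (hPV.1 v) (prob_le_one (hW (φ v)) {y | ψ y ≠ v})
      have b2 : 0 ≤ PV v * (e + t / s) := mul_nonneg (hPV.1 v) (by linarith)
      linarith

end Helpers

/-- **Separation theorem, direct part** (Theorem 6.5, part 1, spectral form). -/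
theorem separation_direct_part
    {𝒱 𝒳 𝒴 : Type} [Countable 𝒱] [Countable 𝒳] [Countable 𝒴]
    (PV : (n : ℕ) → Word 𝒱 n → ℝ) (hPV : ∀ n, IsPMF (PV n))
    (W : (n : ℕ) → Word 𝒳 n → Word 𝒴 n → ℝ) (hW : ∀ n x, IsPMF (W n x))
    (hlt : ∃ PX : (n : ℕ) → Word 𝒳 n → ℝ, (∀ n, IsPMF (PX n)) ∧
      Hbar PV < Ilow PX W) :
    Transmissible PV W := by
  obtain ⟨PX, hPX, hlt⟩ := hlt
  unfold Hbar plimsup at hlt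
  obtain ⟨β, hβ, hβlt⟩ := sInf_lt_iff.1 hlt
  unfold Ilow pliminf at hβlt
  obtain ⟨γ, hγ, hβγ⟩ := lt_sSup_iff.1 hβlt
  obtain ⟨a, ha1, ha2⟩ := EReal.lt_iff_exists_real_btwn.1 hβγ
  obtain ⟨b, hb1, hb2⟩ := EReal.lt_iff_exists_real_btwn.1 ha2
  have hab : a < b := EReal.coe_lt_coe_iff.1 hb1
  have key : ∀ n, ∃ (φ : Word 𝒱 n → Word 𝒳 n) (ψ : Word 𝒴 n → Word 𝒱 n),
      errProb (PV n) (W n) φ ψ ≤ prob (PV n) {v | PV n v < Real.exp (-(n * a))} +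
        prob (fun z : Word 𝒳 n × Word 𝒴 n => PX n z.1 * W n z.1 z.2)
          {z | Real.exp (-(n * b)) * W n z.1 z.2 < ∑' x, PX n x * W n x z.2}
        + Real.exp (-(n * b)) / Real.exp (-(n * a)) := fun n =>
    one_shot (hPV n) (hPX n) (hW n) (Real.exp_pos _) (Real.exp_pos _)
  choose φ ψ hφ using key
  refine ⟨φ, ψ, ?_⟩
  have hexp : Tendsto (fun n : ℕ => Real.exp (-(n * b)) / Real.exp (-(n * a))) atTop (nhds 0) := by
    have h : Tendsto (fun n : ℕ => (Real.exp (a - b)) ^ n) atTop (nhds 0) :=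
      tendsto_pow_atTop_nhds_zero_of_lt_one (Real.exp_pos _).le
        ((Real.exp_lt_exp.2 (by linarith : a - b < 0)).trans_eq Real.exp_zero)
    refine h.congr fun n => ?_
    rw [← Real.exp_nat_mul, ← Real.exp_sub]
    congr 1
    ring
  have hlim := (hβ.add hγ).add hexp
  simp only [add_zero] at hlim
  refine squeeze_zero' (Eventually.of_forall fun n => ?_) ?_ hlim
  · exact tsum_nonneg fun v => mul_nonneg ((hPV n).1 v) (prob_nonneg (hW n _).1 _)
  filter_upwards [eventually_gt_atTop 0] with n hn
  have hn' : (0 : ℝ) < n := by exact_mod_cast hn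
  refine (hφ n).trans (add_le_add (add_le_add ?_ ?_) le_rfl)
  · refine prob_mono' (hPV n).1 (hPV n).2.summable fun v hv hv2 => ?_
    refine ha1.trans (EReal.coe_lt_coe_iff.2 ?_)
    have h1 : Real.log (PV n v) < -(n * a) := (Real.log_lt_iff_lt_exp hv).2 hv2
    rw [one_div, one_div, Real.log_inv, inv_mul_eq_div, lt_div_iff₀ hn']
    linarith
  · have hJ := isPMF_joint (hPX n) (hW n)
    refine prob_mono' hJ.1 hJ.2.summable fun z hz hz2 => ?_
    refine lt_trans (EReal.coe_lt_coe_iff.2 ?_) hb2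
    have hx : 0 < PX n z.1 := (hPX n).1 _ |>.lt_of_ne fun h => by simp [← h] at hz
    have hw : 0 < W n z.1 z.2 := (hW n z.1).1 _ |>.lt_of_ne fun h => by simp [← h] at hz
    have hz3 : Real.exp (-(n * b)) * W n z.1 z.2 < outDistX (PX n) (W n) z.2 := hz2
    have ho : 0 < outDistX (PX n) (W n) z.2 :=
      lt_trans (mul_pos (Real.exp_pos _) hw) hz3
    rw [one_div, inv_mul_eq_div, div_lt_iff₀ hn',
      Real.log_lt_iff_lt_exp (div_pos hw ho), div_lt_iff₀ ho]
    have h5 := mul_lt_mul_of_pos_left hz3 (Real.exp_pos (b * n))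
    rwa [← mul_assoc, ← Real.exp_add, show b * n + -(n * b) = 0 by ring, Real.exp_zero,
      one_mul] at h5

end ISC
end

section
/- Failure of the converse part without strong converse properties (Example 6.1). Let 𝒱 = 𝒳 = 𝒴 = {0,1}. Define the general source V = {Vⁿ} by: P_{Vⁿ} is the uniform distribution on {0,1}ⁿ when n is even, and P_{Vⁿ}(0ⁿ) = 1 when n is odd. Define the general channel W = {Wⁿ} by: Wⁿ(y|x) = 1{y = x} when n is even, and Wⁿ(0ⁿ|x) = 1 for all x when n is odd. Then: (a) V is transmissible over W with zero error probability, i.e. there exist codes (φₙ, ψₙ) with εₙ = 0 for all n; (b) H̄(V) = log 2; and (c) sup_X I_(X;Y) = 0, where the supremum is over all channel inputs X = {Xⁿ}. In particular H̄(V) > sup_X I_(X;Y) although V is transmissible over W. -/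
open Filter Real Topology

namespace ISC

/-- The source of Example 6.1: uniform on `{0,1}ⁿ` for even `n`,
point mass on the all-zeros word for odd `n`. -/
noncomputable def exPV (n : ℕ) : Word Bool n → ℝ :=
  if Even n then fun _ => (1 / 2 : ℝ) ^ n
  else fun v => if v = (fun _ => false) then 1 else 0

/-- The channel of Example 6.1: identity for even `n`,
constant all-zeros output for odd `n`. -/
noncomputable def exW (n : ℕ) : Word Bool n → Word Bool n → ℝ :=
  if Even n then fun x y => if y = x then 1 else 0
  else fun _ y => if y = (fun _ => false) then 1 else 0


lemma prob_empty' {α : Type*} (p : α → ℝ) : prob p ∅ = 0 := by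
  simp [prob]

lemma not_tendsto_of_subseq {f : ℕ → ℝ} {g : ℕ → ℕ} (hg : ∀ k, k ≤ g k)
    (h : ∀ k, f (g k) = 1) (ht : Tendsto f atTop (nhds 0)) : False := by
  have hg' : Tendsto g atTop atTop := tendsto_atTop_mono hg tendsto_id
  have h1 : Tendsto (f ∘ g) atTop (nhds 0) := ht.comp hg'
  have h2 : f ∘ g = fun _ => (1 : ℝ) := funext h
  rw [h2] at h1
  exact one_ne_zero (tendsto_nhds_unique tendsto_const_nhds h1)

lemma err_zero (n : ℕ) : errProb (exPV n) (exW n) id id = 0 := by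
  unfold errProb prob
  rw [tsum_fintype]
  apply Finset.sum_eq_zero
  intro v _
  by_cases hn : Even n
  · apply mul_eq_zero_of_right
    rw [tsum_fintype]
    apply Finset.sum_eq_zero
    intro y _
    by_cases h : y = v <;> simp [exW, hn, h, Set.indicator]
  · by_cases hv : v = fun _ => false
    · apply mul_eq_zero_of_right
      rw [tsum_fintype]
      apply Finset.sum_eq_zero
      intro y _
      by_cases h : y = v
      · simp [h, Set.indicator]
      · have h2 : ¬ y = fun _ => false := by rw [← hv]; exact h
        simp [exW, hn, h2, Set.indicator]
    · simp [exPV, hn, hv]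

lemma entropy_even (n : ℕ) (hn : Even n) (h0 : n ≠ 0) (v : Word Bool n) :
    (1 / (n : ℝ)) * Real.log (1 / exPV n v) = Real.log 2 := by
  have : (n : ℝ) ≠ 0 := by exact_mod_cast h0
  simp only [exPV, hn, if_true]
  rw [one_div_pow, one_div_one_div, Real.log_pow]
  field_simp

lemma entropy_le (n : ℕ) (v : Word Bool n) :
    (1 / (n : ℝ)) * Real.log (1 / exPV n v) ≤ Real.log 2 := by
  have hl : 0 ≤ Real.log 2 := Real.log_nonneg (by norm_num)
  by_cases hn : Even n
  · by_cases h0 : n = 0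
    · subst h0; simpa using hl
    · exact (entropy_even n hn h0 v).le
  · by_cases hv : v = fun _ => false
    · simpa [exPV, hn, hv] using hl
    · simpa [exPV, hn, hv] using hl

lemma Hbar_ex : Hbar exPV = (Real.log 2 : EReal) := by
  unfold Hbar plimsup
  apply le_antisymm
  · apply sInf_le
    show Tendsto _ _ _
    have : ∀ n, {a : Word Bool n | ((Real.log 2 : ℝ) : EReal) <
        (((1 / (n : ℝ)) * Real.log (1 / exPV n a) : ℝ) : EReal)} = ∅ := by
      intro n
      ext a
      simp only [Set.mem_setOf_eq, Set.mem_empty_iff_false, iff_false, not_lt]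
      exact EReal.coe_le_coe_iff.2 (entropy_le n a)
    simp only [this, prob_empty']
    exact tendsto_const_nhds
  · apply le_sInf
    intro β hβ
    by_contra hlt
    rw [not_le] at hlt
    refine not_tendsto_of_subseq (g := fun k => 2 * k + 2) (fun k => by lia) ?_ hβ
    intro k
    have he : Even (2 * k + 2) := ⟨k + 1, by ring⟩
    have hs : {a : Word Bool (2 * k + 2) | β <
        (((1 / ((2 * k + 2 : ℕ) : ℝ)) * Real.log (1 / exPV (2 * k + 2) a) : ℝ) : EReal)}
        = Set.univ := by
      ext a
      simp only [Set.mem_setOf_eq, Set.mem_univ, iff_true]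
      rw [entropy_even _ he (by lia)]
      exact hlt
    show prob (exPV (2 * k + 2)) _ = 1
    rw [hs]
    simp [prob, exPV, he, tsum_fintype, ← mul_pow]

lemma outDistX_odd (n : ℕ) (hn : ¬ Even n) (PX : Word Bool n → ℝ) (hP : IsPMF PX)
    (y : Word Bool n) : outDistX PX (exW n) y = if y = (fun _ => false) then 1 else 0 := by
  simp only [outDistX, exW, hn, if_false]
  rw [tsum_mul_right, hP.2.tsum_eq, one_mul]

lemma Ilow_le (PX : (n : ℕ) → Word Bool n → ℝ) (hP : ∀ n, IsPMF (PX n)) :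
    Ilow PX exW ≤ 0 := by
  unfold Ilow pliminf
  apply sSup_le
  intro β hβ
  by_contra hlt
  rw [not_le] at hlt
  refine not_tendsto_of_subseq (g := fun k => 2 * k + 1) (fun k => by lia) ?_ hβ
  intro k
  have he : ¬ Even (2 * k + 1) := by simp
  have hs : {z : Word Bool (2 * k + 1) × Word Bool (2 * k + 1) |
      (((1 / ((2 * k + 1 : ℕ) : ℝ)) * Real.log (exW (2 * k + 1) z.1 z.2 /
        outDistX (PX (2 * k + 1)) (exW (2 * k + 1)) z.2) : ℝ) : EReal) < β} = Set.univ := by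
    ext z
    simp only [Set.mem_setOf_eq, Set.mem_univ, iff_true]
    rw [outDistX_odd _ he _ (hP _)]
    have h0 : Real.log (exW (2 * k + 1) z.1 z.2 / if z.2 = (fun _ => false) then 1 else 0) = 0 := by
      by_cases hz : z.2 = fun _ => false
      · simp [exW, he, hz]
      · simp [hz]
    rw [h0, mul_zero]
    exact hlt
  show prob (jointXY (PX (2 * k + 1)) (exW (2 * k + 1))) _ = 1
  rw [hs]
  have h1 := (hP (2 * k + 1)).2.tsum_eq
  rw [tsum_fintype] at h1
  simp only [prob, Set.indicator_univ, tsum_fintype, jointXY, Fintype.sum_prod_type]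
  simp [exW, he, h1]

lemma supIlow_ex : supIlow exW = (0 : EReal) := by
  unfold supIlow
  apply le_antisymm
  · exact iSup_le fun PX => Ilow_le PX.1 PX.2
  · let PX : (n : ℕ) → Word Bool n → ℝ := fun n x => if x = (fun _ => false) then 1 else 0
    have hP : ∀ n, IsPMF (PX n) := fun n =>
      ⟨fun a => by dsimp only [PX]; split_ifs <;> norm_num, hasSum_ite_eq _ _⟩
    refine le_trans ?_ (le_iSup (fun PX : {PX : (n : ℕ) → Word Bool n → ℝ // ∀ n, IsPMF (PX n)} =>
      Ilow PX.1 exW) ⟨PX, hP⟩)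
    apply le_sSup
    show Tendsto _ _ _
    have hW : ∀ n (x y : Word Bool n), exW n x y = 0 ∨ exW n x y = 1 := by
      intro n x y
      unfold exW
      split_ifs
      · by_cases h : y = x <;> simp [h]
      · by_cases h : y = (fun _ => false) <;> simp [h]
    have ho : ∀ n y, outDistX (PX n) (exW n) y = exW n (fun _ => false) y := by
      intro n y
      simp [outDistX, PX]
    have hs : ∀ n, {z : Word Bool n × Word Bool n |
      (((1 / (n : ℝ)) * Real.log (exW n z.1 z.2 /
        outDistX (PX n) (exW n) z.2) : ℝ) : EReal) < 0} = ∅ := by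
      intro n
      ext z
      simp only [Set.mem_setOf_eq, Set.mem_empty_iff_false, iff_false]
      rw [ho]
      rcases hW n z.1 z.2 with h | h <;> rcases hW n (fun _ => false) z.2 with h' | h' <;>
        simp [h, h']
    simp only [hs, prob_empty']
    exact tendsto_const_nhds

/-- **Failure of the converse part without strong converse properties** (Example 6.1). -/
theorem failure_of_converse_without_strong_converse :
    (∃ (φ : (n : ℕ) → Word Bool n → Word Bool n)
        (ψ : (n : ℕ) → Word Bool n → Word Bool n),
      ∀ n, errProb (exPV n) (exW n) (φ n) (ψ n) = 0) ∧
    Hbar exPV = (Real.log 2 : EReal) ∧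
    supIlow exW = (0 : EReal) ∧
    supIlow exW < Hbar exPV := by
  have h2 : (0 : EReal) < (Real.log 2 : EReal) :=
    EReal.coe_pos.2 (Real.log_pos (by norm_num))
  refine ⟨⟨fun _ => id, fun _ => id, err_zero⟩, Hbar_ex, supIlow_ex, ?_⟩
  rw [supIlow_ex, Hbar_ex]
  exact h2

end ISC
end
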